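/- Let D = {M_i, π_{i,j} | i,j ∈ D and i ≤ j} be a well-founded directed system of models of set theory with direct limit M_∞ and direct limit maps π_{i,∞} : M_i → M_∞. Let X be a bounded subset of M_∞. Suppose that the D-indexed family {π_{i,∞}⁻¹[X] | i ∈ D} is uniformly definable over D. Then X ∈ M_∞. -/

import Mathlib

/- ## A framework for transitive class/set models of fragments of ZFC,
     inside the universe `ZFSet` of ZF sets. -/

open FirstOrder FirstOrder.Language

/-- The language of set theory: a single binary relation symbol `∈`. -/
inductive SetRelSym : ℕ → Type
  | mem : SetRelSym 2

/-- The first-order language of set theory. -/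
def setL : FirstOrder.Language := ⟨fun _ => Empty, SetRelSym⟩

/-- Evaluation of a term of the language of set theory (terms are just variables). -/
def tval {n : ℕ} (v : Fin n → ZFSet) : setL.Term (Empty ⊕ Fin n) → ZFSet
  | .var (Sum.inl e) => e.elim
  | .var (Sum.inr i) => v i
  | .func f _ => f.elim

/-- Tarskian satisfaction of a formula of the language of set theory in a class `S` of
ZF-sets (equipped with true membership), under the assignment `v`. -/
def ZSat (S : Set ZFSet) : ∀ {n : ℕ}, setL.BoundedFormula Empty n → (Fin n → ZFSet) → Prop
  | _, .falsum, _ => False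
  | _, .equal t u, v => tval v t = tval v u
  | _, .rel R ts, v =>
      match R with
      | SetRelSym.mem => tval v (ts 0) ∈ tval v (ts 1)
  | _, .imp φ ψ, v => ZSat S φ v → ZSat S ψ v
  | _, .all φ, v => ∀ x ∈ S, ZSat S φ (Fin.snoc v x)

/-- Satisfaction of a sentence in a class of ZF-sets. -/
def SatS (S : Set ZFSet) (σ : setL.Sentence) : Prop := ZSat S σ finZeroElim

/-- A class of ZF-sets is transitive. -/
def IsTransClass (S : Set ZFSet) : Prop := ∀ x ∈ S, ∀ y ∈ x, y ∈ S

/-- `r` is a well-ordering of the set `x`, from the point of view of the class `S`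
(Kuratowski pairs code the relation; minimality is required for nonempty subsets of `x`
lying in `S`). -/
def WellOrders (S : Set ZFSet) (r x : ZFSet) : Prop :=
  (∀ a ∈ x, ZFSet.pair a a ∉ r) ∧
  (∀ a ∈ x, ∀ b ∈ x, ∀ c ∈ x, ZFSet.pair a b ∈ r → ZFSet.pair b c ∈ r → ZFSet.pair a c ∈ r) ∧
  (∀ a ∈ x, ∀ b ∈ x, a ≠ b → (ZFSet.pair a b ∈ r ∨ ZFSet.pair b a ∈ r)) ∧
  (∀ y ∈ S, (∀ z ∈ y, z ∈ x) → y ≠ ∅ → ∃ m ∈ y, ∀ z ∈ y, ZFSet.pair z m ∉ r)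

/-- `S` is a transitive model of ZFC⁻, i.e. of ZFC stated with the Replacement Scheme and
the Well-Ordering Theorem but without the Power Set Axiom.  (Extensionality and Foundation
are automatic for transitive classes of ZF-sets.) -/
def ModelsZFCminus (S : Set ZFSet) : Prop :=
  IsTransClass S ∧
  (∅ : ZFSet) ∈ S ∧
  (∀ x ∈ S, ∀ y ∈ S, ({x, y} : ZFSet) ∈ S) ∧
  (∀ x ∈ S, (ZFSet.sUnion x : ZFSet) ∈ S) ∧
  ZFSet.omega ∈ S ∧
  (∀ (n : ℕ) (φ : setL.BoundedFormula Empty (n + 1)) (p : Fin n → ZFSet),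
    (∀ i, p i ∈ S) → ∀ a ∈ S, ∃ b ∈ S, ∀ y, y ∈ b ↔ (y ∈ a ∧ ZSat S φ (Fin.snoc p y))) ∧
  (∀ (n : ℕ) (φ : setL.BoundedFormula Empty (n + 2)) (p : Fin n → ZFSet),
    (∀ i, p i ∈ S) → ∀ a ∈ S,
      (∀ x ∈ a, ∃! y, y ∈ S ∧ ZSat S φ (Fin.snoc (Fin.snoc p x) y)) →
      ∃ b ∈ S, ∀ y, y ∈ b ↔ ∃ x ∈ a, y ∈ S ∧ ZSat S φ (Fin.snoc (Fin.snoc p x) y)) ∧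
  (∀ x ∈ S, ∃ r ∈ S, WellOrders S r x)

/-- `S` is a transitive model of ZFC. -/
def ModelsZFC (S : Set ZFSet) : Prop :=
  ModelsZFCminus S ∧ ∀ x ∈ S, ∃ p ∈ S, ∀ y, y ∈ p ↔ (y ∈ S ∧ y ⊆ x)

/-- `f` is (the graph of) a surjection of `a` onto `b`. -/
def SurjFun (f a b : ZFSet) : Prop :=
  ZFSet.IsFunc a b f ∧ ∀ y ∈ b, ∃ x ∈ a, ZFSet.pair x y ∈ f

/-- `f` is (the graph of) an injection of `a` into `b`. -/
def InjFun (f a b : ZFSet) : Prop :=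
  ZFSet.IsFunc a b f ∧ ∀ x ∈ a, ∀ x' ∈ a, ∀ y, ZFSet.pair x y ∈ f → ZFSet.pair x' y ∈ f → x = x'

/-- `f` is (the graph of) a cofinal function from `β` into the ordinal `α`. -/
def CofinalFun (f β α : ZFSet) : Prop :=
  ZFSet.IsFunc β α f ∧ ∀ ξ ∈ α, ∃ η ∈ β, ∃ ζ, ZFSet.pair η ζ ∈ f ∧ (ξ ∈ ζ ∨ ξ = ζ)

/-- `μ = cof(α)` as computed inside the class `S` (for `S = Set.univ`, the true cofinality). -/
def IsCofOf (S : Set ZFSet) (α μ : ZFSet) : Prop :=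
  μ ∈ S ∧ μ.IsOrdinal ∧ (∃ f ∈ S, CofinalFun f μ α) ∧
  ∀ ν ∈ S, ZFSet.IsOrdinal ν → (∃ f ∈ S, CofinalFun f ν α) → μ ⊆ ν

/-- `κ` is a cardinal from the point of view of the class `S`
(for `S = Set.univ`, a true cardinal). -/
def IsCardIn (S : Set ZFSet) (κ : ZFSet) : Prop :=
  κ.IsOrdinal ∧ ∀ α ∈ κ, ∀ f ∈ S, ¬ SurjFun f α κ

/-- `μ` is an (infinite) regular cardinal from the point of view of the class `S`. -/
def IsRegularIn (S : Set ZFSet) (μ : ZFSet) : Prop :=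
  ZFSet.omega ⊆ μ ∧ IsCardIn S μ ∧ IsCofOf S μ μ

/-- `ν = μ⁺`, the cardinal successor of `μ`, as computed in the class `S`. -/
def CardSuccIn (S : Set ZFSet) (μ ν : ZFSet) : Prop :=
  ν ∈ S ∧ IsCardIn S ν ∧ μ ∈ ν ∧ ∀ ξ ∈ S, IsCardIn S ξ → μ ∈ ξ → ν ⊆ ξ

/-- `μ` is the largest cardinal of the model `S`. -/
def IsLargestCardIn (S : Set ZFSet) (μ : ZFSet) : Prop :=
  μ ∈ S ∧ IsCardIn S μ ∧ ∀ x ∈ S, IsCardIn S x → x ⊆ μ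

/-- `α = sup A`, for `A` a collection of ordinals: `α` is the least ordinal above all of them. -/
def IsSupOf (α : ZFSet) (A : Set ZFSet) : Prop :=
  α.IsOrdinal ∧ (∀ a ∈ A, a ⊆ α) ∧ ∀ β : ZFSet, β.IsOrdinal → (∀ a ∈ A, a ⊆ β) → α ⊆ β

/-- `π` is an elementary embedding (for the language of set theory) from the class `S`
into the class `T`. -/
def IsElem (S T : Set ZFSet) (π : ZFSet → ZFSet) : Prop :=
  (∀ x ∈ S, π x ∈ T) ∧
  ∀ (n : ℕ) (φ : setL.BoundedFormula Empty n) (v : Fin n → ZFSet),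
    (∀ i, v i ∈ S) → (ZSat S φ v ↔ ZSat T φ (fun i => π (v i)))

/-- A directed system of models of set theory: a directed partial order `ι`, transitive
(set) models `M i` of ZFC, and commuting elementary embeddings `pi i j : M i → M j`. -/
structure DirSystem.{u_1} (ι : Type) [PartialOrder ι] where
  M : ι → ZFSet.{u_1}
  pi : ι → ι → ZFSet → ZFSet
  directed : ∀ i j : ι, ∃ k, i ≤ k ∧ j ≤ k
  zfc : ∀ i, ModelsZFC (M i).toSet
  elem : ∀ i j, i ≤ j → IsElem (M i).toSet (M j).toSet (pi i j)
  map_id : ∀ i, ∀ x ∈ M i, pi i i x = x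
  map_comp : ∀ i j k, i ≤ j → j ≤ k → ∀ x ∈ M i, pi j k (pi i j x) = pi i k x

/-- `limit` (a transitive class) together with the maps `e i : M i → limit` is the
(transitivized) direct limit of the well-founded directed system `D`: the maps are
elementary, commute with the system maps, and every element of the limit is in the
range of some `e i`. -/
structure IsDirLimit {ι : Type} [PartialOrder ι] (D : DirSystem ι)
    (limit : Set ZFSet) (e : ι → ZFSet → ZFSet) : Prop where
  trans : IsTransClass limit
  elem : ∀ i, IsElem (D.M i).toSet limit (e i)
  compat : ∀ i j, i ≤ j → ∀ x ∈ D.M i, e j (D.pi i j x) = e i x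
  exhaust : ∀ y ∈ limit, ∃ i, ∃ x ∈ D.M i, e i x = y

/-- The `A`-indexed family of unary relations (sets) `R i` is uniformly definable over the
directed system `D`: some formula `φ(v, u)` with a parameter `a ∈ M i` (moved along by the
system maps) defines `R j` over `M j` for all `j ≥ i`. -/
def UnifDef1 {ι : Type} [PartialOrder ι] (D : DirSystem ι) (A : Set ι)
    (R : ι → Set ZFSet) : Prop :=
  ∃ i ∈ A, ∃ a, a ∈ D.M i ∧ ∃ φ : setL.BoundedFormula Empty 2,
    ∀ j, i ≤ j → j ∈ A ∧ (∀ x ∈ R j, x ∈ D.M j) ∧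
      ∀ x, x ∈ D.M j → (x ∈ R j ↔ ZSat (D.M j).toSet φ ![x, D.pi i j a])

/-- The family of binary relations `R i` is uniformly definable over the directed system `D`. -/
def UnifDef2 {ι : Type} [PartialOrder ι] (D : DirSystem ι)
    (R : ι → ZFSet → ZFSet → Prop) : Prop :=
  ∃ i, ∃ a, a ∈ D.M i ∧ ∃ φ : setL.BoundedFormula Empty 3,
    ∀ j, i ≤ j → (∀ x y, R j x y → x ∈ D.M j ∧ y ∈ D.M j) ∧
      ∀ x, x ∈ D.M j → ∀ y, y ∈ D.M j →
        (R j x y ↔ ZSat (D.M j).toSet φ ![x, y, D.pi i j a])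

/-!
Let `φ` and `a ∈ M i` define the family of preimages of `X`. Every `x ∈ limit` is `e j z` for some
`j ≥ i`, and `x ∈ X` iff `M j ⊨ φ[z, pi i j a]` iff `limit ⊨ φ[x, e i a]`, since `e j` is
elementary. So `X` is definable over the direct limit. The direct limit is elementarily equivalent
to a model of ZFC, hence satisfies the separation scheme, and separation applied to a bound of `X`
yields `X` as an element.
-/

section Satisfaction

variable {S T : Set ZFSet}

theorem apply_pair {α β : Type*} (f : α → β) (x y : α) :
    (fun i => f (![x, y] i)) = ![f x, f y] :=
  funext (Fin.forall_fin_two.2 ⟨rfl, rfl⟩)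

/-- A class of ZF-sets with true membership, as a first-order structure; `ZSat` is its satisfaction
relation by `zSat_iff_realize`. -/
instance membershipStructure (S : Set ZFSet) : setL.Structure S where
  funMap f := f.elim
  RelMap := fun | .mem, x => (x 0 : ZFSet) ∈ (x 1 : ZFSet)

/-- The formula `t ∈ u`. -/
def memFormula {n : ℕ} (t u : setL.Term (Empty ⊕ Fin n)) : setL.BoundedFormula Empty n :=
  Relations.boundedFormula₂ (L := setL) SetRelSym.mem t u

theorem realize_memFormula {n : ℕ} {t u : setL.Term (Empty ⊕ Fin n)} {v : Empty → S}
    {xs : Fin n → S} :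
    (memFormula t u).Realize v xs ↔
      (t.realize (Sum.elim v xs)).1 ∈ (u.realize (Sum.elim v xs)).1 :=
  BoundedFormula.realize_rel₂

theorem tval_eq_realize {n : ℕ} (t : setL.Term (Empty ⊕ Fin n)) (v : Empty → S) (xs : Fin n → S) :
    tval (fun i => (xs i : ZFSet)) t = t.realize (Sum.elim v xs) := by
  match t with
  | .var (Sum.inl z) => exact z.elim
  | .var (Sum.inr _) => rfl
  | .func f _ => exact f.elim

theorem coe_snoc {n : ℕ} (p : Fin n → S) (y : S) :
    (fun i => ((Fin.snoc p y : Fin (n + 1) → S) i : ZFSet)) =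
      Fin.snoc (fun i => (p i : ZFSet)) (y : ZFSet) :=
  Fin.comp_snoc (fun x : S => (x : ZFSet)) p y

theorem zSat_iff_realize {n : ℕ} (φ : setL.BoundedFormula Empty n) {v : Empty → S}
    {xs : Fin n → S} : ZSat S φ (fun i => (xs i : ZFSet)) ↔ φ.Realize v xs := by
  induction φ with
  | falsum => rfl
  | equal t u =>
    simp only [ZSat, BoundedFormula.Realize, tval_eq_realize _ v, Subtype.coe_inj]
  | rel R ts =>
    cases R
    simp only [ZSat, tval_eq_realize _ v]
    rfl
  | imp φ ψ ihφ ihψ => simp only [ZSat, BoundedFormula.Realize, ihφ, ihψ]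
  | all φ ih => simp only [ZSat, BoundedFormula.Realize, ← ih, Subtype.forall, coe_snoc]

theorem IsElem.elementarilyEquivalent {π : ZFSet → ZFSet} (h : IsElem S T π) : S ≅[setL] T := by
  refine elementarilyEquivalent_iff.2 fun σ => ?_
  calc S ⊨ σ ↔ ZSat S σ fun i => ((default : Fin 0 → S) i : ZFSet) := (zSat_iff_realize σ).symm
    _ ↔ ZSat T σ fun i => π ((default : Fin 0 → S) i) := h.2 0 σ _ finZeroElim
    _ ↔ ZSat T σ fun i => ((default : Fin 0 → T) i : ZFSet) := by
      rw [Subsingleton.elim (fun i => π ((default : Fin 0 → S) i))]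
    _ ↔ T ⊨ σ := zSat_iff_realize σ

end Satisfaction

section Definability

variable {S : Set ZFSet}

theorem definable₁_of_zSat {X : Set ZFSet} (φ : setL.BoundedFormula Empty 2) {c : ZFSet}
    (hc : c ∈ S) (hφ : ∀ x ∈ S, x ∈ X ↔ ZSat S φ ![x, c]) :
    (Set.univ : Set S).Definable₁ setL {x : S | (x : ZFSet) ∈ X} := by
  let param : (Set.univ : Set S) := ⟨⟨c, hc⟩, trivial⟩
  let ψ : setL.Formula ((Set.univ : Set S) ⊕ Fin 1) :=
    φ.toFormula.relabel (Sum.elim Empty.elim ![Sum.inr 0, Sum.inl param])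
  refine Set.definable_iff_exists_formula_sum.2 ⟨ψ, Set.ext fun v => ?_⟩
  calc (v 0 : ZFSet) ∈ X ↔ ZSat S φ ![(v 0 : ZFSet), c] := hφ _ (v 0).2
    _ ↔ ZSat S φ (fun i => (![v 0, param] i : S)) := by rw [apply_pair]
    _ ↔ φ.Realize _ ![v 0, param] := zSat_iff_realize φ
    _ ↔ ψ.Realize (Sum.elim (↑) v) := by
      rw [Formula.realize_relabel, BoundedFormula.realize_toFormula]
      exact iff_of_eq (congrArg _ (funext (Fin.forall_fin_two.2 ⟨rfl, rfl⟩)))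

theorem exists_realize_snoc_of_definable₁ {Y : Set S} (hY : (Set.univ : Set S).Definable₁ setL Y) :
    ∃ (n : ℕ) (φ : setL.BoundedFormula Empty (n + 1)) (p : Fin n → S),
      ∀ y, y ∈ Y ↔ φ.Realize default (Fin.snoc p y) := by
  obtain ⟨A, -, hA⟩ := Set.definable_iff_finitely_definable.1 hY
  obtain ⟨φ, hφ⟩ := Set.definable_iff_exists_formula_sum.1 hA
  let index : A ⊕ Fin 1 → Fin (A.card + 1) :=
    Sum.elim (fun c => (A.equivFin c).castSucc) fun _ => Fin.last _
  let p : Fin A.card → S := fun i => A.equivFin.symm i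
  let ψ : setL.BoundedFormula Empty (A.card + 1) :=
    BoundedFormula.relabel (k := 0) Sum.inr (φ.relabel index)
  refine ⟨A.card, ψ, p, fun y => ?_⟩
  have hy := Set.ext_iff.1 hφ fun _ => y
  have index_spec : Fin.snoc p y ∘ index = Sum.elim (↑) fun _ => y := by
    ext (c | i) <;> simp [index, p]
  rw [Formula.realize_relabel_sumInr, Formula.realize_relabel, index_spec]
  exact hy

end Definability

section Separation

variable {S : Set ZFSet}

/-- The separation axiom for a formula `φ(p, y)`: for all parameters `p` and every set `a`, the set
`{y ∈ a | φ(p, y)}` exists. The variables `a`, its subset and `y` have indices `n`, `n + 1` and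
`n + 2`, so lifting the last variable of `φ` by two makes it refer to `y`. -/
def separationAxiom {n : ℕ} (φ : setL.BoundedFormula Empty (n + 1)) : setL.Sentence :=
  let a := &(Fin.last n).castSucc.castSucc
  let b := &(Fin.last (n + 1)).castSucc
  let y := &(Fin.last (n + 2))
  (∀' ∃' ∀' (memFormula y b ⇔ (memFormula y a ⊓ φ.liftAt 2 n))).alls

theorem models_separationAxiom_iff {n : ℕ} (φ : setL.BoundedFormula Empty (n + 1)) :
    S ⊨ separationAxiom φ ↔ ∀ (p : Fin n → S) (a : S), ∃ b : S, ∀ y : S,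
      (y : ZFSet) ∈ (b : ZFSet) ↔
        (y : ZFSet) ∈ (a : ZFSet) ∧ φ.Realize default (Fin.snoc p y) := by
  have snoc_comp_lift (p : Fin n → S) (a b y : S) :
      (Fin.snoc (Fin.snoc (Fin.snoc p a) b) y : Fin (n + 3) → S) ∘
        (fun i : Fin (n + 1) => if (i : ℕ) < n then Fin.castAdd 2 i else Fin.addNat i 2) =
      Fin.snoc p y := by
    funext i
    induction i using Fin.lastCases with
    | last =>
      have addNat_last : (Fin.last n).addNat 2 = Fin.last (n + 2) := rfl
      simp [addNat_last]
    | cast i =>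
      have castAdd_castSucc : Fin.castAdd 2 i.castSucc = i.castSucc.castSucc.castSucc := rfl
      simp [castAdd_castSucc]
  rw [separationAxiom, Sentence.Realize, BoundedFormula.realize_alls]
  simp [BoundedFormula.realize_liftAt, realize_memFormula, snoc_comp_lift]

/-- The axiom scheme of separation. -/
def separationScheme : setL.Theory :=
  {σ | ∃ (n : ℕ) (φ : setL.BoundedFormula Empty (n + 1)), σ = separationAxiom φ}

theorem ModelsZFCminus.models_separationScheme (hS : ModelsZFCminus S) : S ⊨ separationScheme := by
  obtain ⟨-, -, -, -, -, hsep, -, -⟩ := hS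
  refine ⟨?_⟩
  rintro _ ⟨n, φ, rfl⟩
  refine (models_separationAxiom_iff φ).2 fun p a => ?_
  obtain ⟨b, hb, mem_b⟩ := hsep n φ (fun i => p i) (fun i => (p i).2) a a.2
  exact ⟨⟨b, hb⟩, fun y => by rw [mem_b, ← coe_snoc, zSat_iff_realize]⟩

theorem IsTransClass.exists_mem_iff_of_definable₁ (hS : IsTransClass S)
    (hsep : S ⊨ separationScheme) {X : Set ZFSet}
    (hX : (Set.univ : Set S).Definable₁ setL {x : S | (x : ZFSet) ∈ X})
    {a : ZFSet} (ha : a ∈ S) (hXa : ∀ x ∈ X, x ∈ a) : ∃ b ∈ S, ∀ y, y ∈ b ↔ y ∈ X := by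
  obtain ⟨n, φ, p, hφ⟩ := exists_realize_snoc_of_definable₁ hX
  have hax : S ⊨ separationAxiom φ := hsep.realize_of_mem _ ⟨n, φ, rfl⟩
  obtain ⟨b, mem_b⟩ := (models_separationAxiom_iff φ).1 hax p ⟨a, ha⟩
  refine ⟨b, b.2, fun y => ⟨fun hy => ?_, fun hy => ?_⟩⟩
  · let y' : S := ⟨y, hS b b.2 y hy⟩
    exact (hφ y').2 ((mem_b y').1 hy).2
  · let y' : S := ⟨y, hS a ha y (hXa y hy)⟩
    exact (mem_b y').2 ⟨hXa y hy, (hφ y').1 hy⟩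

end Separation

section DirectLimit

variable {ι : Type} [PartialOrder ι] {D : DirSystem ι} {limit : Set ZFSet} {e : ι → ZFSet → ZFSet}

theorem IsDirLimit.exists_ge_apply_eq (hlim : IsDirLimit D limit e) (i : ι) {x : ZFSet}
    (hx : x ∈ limit) : ∃ j, i ≤ j ∧ ∃ z ∈ D.M j, e j z = x := by
  obtain ⟨k, z, hz, rfl⟩ := hlim.exhaust x hx
  obtain ⟨j, hij, hkj⟩ := D.directed i k
  exact ⟨j, hij, D.pi k j z, (D.elem k j hkj).1 z hz, hlim.compat k j hkj z hz⟩

theorem IsDirLimit.exists_zSat_of_unifDef1 (hlim : IsDirLimit D limit e) {A : Set ι}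
    {X : Set ZFSet} (hdef : UnifDef1 D A fun i => {y | y ∈ D.M i ∧ e i y ∈ X}) :
    ∃ φ : setL.BoundedFormula Empty 2, ∃ c ∈ limit, ∀ x ∈ limit,
      x ∈ X ↔ ZSat limit φ ![x, c] := by
  obtain ⟨i, -, a, ha, φ, hφ⟩ := hdef
  refine ⟨φ, e i a, (hlim.elem i).1 a ha, fun x hx => ?_⟩
  obtain ⟨j, hij, z, hz, rfl⟩ := hlim.exists_ge_apply_eq i hx
  have ha' : D.pi i j a ∈ D.M j := (D.elem i j hij).1 a ha
  calc e j z ∈ X ↔ z ∈ {y | y ∈ D.M j ∧ e j y ∈ X} := (and_iff_right hz).symm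
    _ ↔ ZSat (D.M j).toSet φ ![z, D.pi i j a] := (hφ j hij).2.2 z hz
    _ ↔ ZSat limit φ (fun k => e j (![z, D.pi i j a] k)) :=
      (hlim.elem j).2 2 φ _ (Fin.forall_fin_two.2 ⟨hz, ha'⟩)
    _ ↔ ZSat limit φ ![e j z, e i a] := by
      rw [apply_pair, hlim.compat i j hij a ha]

end DirectLimit

/-- Let `D` be a well-founded directed system of models of set theory with
(transitivized) direct limit `limit` and direct limit maps `e i`.  Let `X` be a bounded
subset of the limit (i.e. `X ⊆ y₀` for some `y₀` in the limit).  If the family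
`{e i ⁻¹[X] | i ∈ D}` is uniformly definable over `D`, then `X ∈ limit`. -/
theorem definability_lemma {ι : Type} [PartialOrder ι] (D : DirSystem ι)
    (limit : Set ZFSet) (e : ι → ZFSet → ZFSet) (hlim : IsDirLimit D limit e)
    (X : Set ZFSet)
    (y₀ : ZFSet) (hy₀ : y₀ ∈ limit) (hbdd : ∀ x ∈ X, x ∈ y₀)
    (hdef : UnifDef1 D Set.univ (fun i => {y : ZFSet | y ∈ D.M i ∧ e i y ∈ X})) :
    ∃ x ∈ limit, ∀ y : ZFSet, y ∈ x ↔ y ∈ X := by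
  obtain ⟨φ, c, hc, hφ⟩ := hlim.exists_zSat_of_unifDef1 hdef
  obtain ⟨i, -⟩ := hlim.exhaust y₀ hy₀
  have hsep : limit ⊨ separationScheme :=
    (hlim.elem i).elementarilyEquivalent.theory_model_iff.1 (D.zfc i).1.models_separationScheme
  exact hlim.trans.exists_mem_iff_of_definable₁ hsep (definable₁_of_zSat φ hc hφ) hy₀ hbdd
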